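/- For every integer n ≥ 3, there exists an entropy of mixing S : Ω_n → ℝ if and only if n = 3. -/

import Mathlib

open Real

noncomputable section

/-- The ambient vector space ℝ³. -/
abbrev V3 : Type := Fin 3 → ℝ

/-- The linear functional on ℝ³ given by the Euclidean inner product with `v`. -/
def dotL (v : V3) : V3 →ₗ[ℝ] ℝ :=
  ∑ i, v i • (LinearMap.proj i : V3 →ₗ[ℝ] ℝ)

/-- The unit effect `u (x, y, z) = z`. -/
def uEff : V3 →ₗ[ℝ] ℝ := LinearMap.proj 2

/-- `e` is an effect on `Ω`: a linear functional with values in `[0,1]` on `Ω`. -/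
def IsEffect (Ω : Set V3) (e : V3 →ₗ[ℝ] ℝ) : Prop :=
  ∀ ω ∈ Ω, 0 ≤ e ω ∧ e ω ≤ 1

/-- The states `ω 0, …, ω (l-1)` are perfectly distinguishable in `Ω`:
there are effects summing to the unit effect with `e i (ω j) = δ_{ij}`. -/
def PerfDist (Ω : Set V3) {l : ℕ} (ω : Fin l → V3) : Prop :=
  ∃ e : Fin l → (V3 →ₗ[ℝ] ℝ),
    (∀ i, IsEffect Ω (e i)) ∧ (∑ i, e i) = uEff ∧
    ∀ i j, e i (ω j) = if i = j then 1 else 0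

/-- `S` is an entropy of mixing on `Ω`: it vanishes on extreme points, and for every
finite family of perfectly distinguishable states and every probability weight,
`S (Σ pᵢ ωᵢ) = Σ pᵢ S(ωᵢ) − Σ pᵢ log pᵢ` (note `Real.log 0 = 0`, so `0 log 0 = 0`). -/
def IsEntropyOfMixing (Ω : Set V3) (S : V3 → ℝ) : Prop :=
  (∀ ω ∈ Set.extremePoints ℝ Ω, S ω = 0) ∧
  ∀ (l : ℕ) (ω : Fin l → V3), (∀ j, ω j ∈ Ω) → PerfDist Ω ω →
    ∀ p : Fin l → ℝ, (∀ i, 0 ≤ p i) → (∑ i, p i) = 1 →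
      S (∑ i, p i • ω i) = (∑ i, p i * S (ω i)) - ∑ i, p i * Real.log (p i)

/-- `r_n = √(1 / cos (π/n))`. -/
def rn (n : ℕ) : ℝ := Real.sqrt (1 / Real.cos (π / n))

/-- The pure states `ω_i^n` of the `n`-gon theory (indices mod `n` via periodicity). -/
def pur (n : ℕ) (i : ℤ) : V3 :=
  ![rn n * Real.cos (2 * π * i / n), rn n * Real.sin (2 * π * i / n), 1]

/-- The `n`-gon state space `Ω_n`: the convex hull of the `n` pure states. -/
def Omega (n : ℕ) : Set V3 :=
  convexHull ℝ {x : V3 | ∃ i : Fin n, x = pur n (i : ℤ)}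

/-- The extreme effect `e_i^n` for even `n`. -/
def effE (n : ℕ) (i : ℤ) : V3 →ₗ[ℝ] ℝ :=
  dotL ((1/2 : ℝ) •
    ![rn n * Real.cos ((2*i-1) * π / n), rn n * Real.sin ((2*i-1) * π / n), 1])

/-- The extreme effect `e_i^n` for odd `n`. -/
def effO (n : ℕ) (i : ℤ) : V3 →ₗ[ℝ] ℝ :=
  dotL ((1/(1 + rn n ^ 2)) •
    ![rn n * Real.cos (2*i*π/n), rn n * Real.sin (2*i*π/n), 1])

/-- The disk state space `Ω_∞ = {(x,y,1) : x² + y² ≤ 1}`. -/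
def OmegaInf : Set V3 := {x : V3 | x 2 = 1 ∧ (x 0)^2 + (x 1)^2 ≤ 1}

/-- The pure states `ω_θ^∞` of the disk theory. -/
def purInf (θ : ℝ) : V3 := ![Real.cos θ, Real.sin θ, 1]

/-- The extreme effects `e_θ^∞` of the disk theory. -/
def effInf (θ : ℝ) : V3 →ₗ[ℝ] ℝ :=
  dotL ((1/2 : ℝ) • ![Real.cos θ, Real.sin θ, 1])

/-- The binary (1-bit Shannon) entropy `H(p) = −p log p − (1−p) log (1−p)`. -/
def H (p : ℝ) : ℝ := -(p * Real.log p) - (1 - p) * Real.log (1 - p)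

lemma H_eq (p : ℝ) : H p = Real.binEntropy p := by
  simp [H, Real.binEntropy_eq_negMulLog_add_negMulLog_one_sub, Real.negMulLog]; ring

lemma mixS {Ω : Set V3} {S : V3 → ℝ} (hS : IsEntropyOfMixing Ω S)
    (hu : ∀ x ∈ Ω, x 2 = 1) (e : V3 →ₗ[ℝ] ℝ) (he : IsEffect Ω e) {x y : V3}
    (hx : x ∈ Ω) (hy : y ∈ Ω) (ex : e x = 1) (ey : e y = 0) {p : ℝ} (h0 : 0 ≤ p) (h1 : p ≤ 1) :
    S (p • x + (1 - p) • y) = p * S x + (1 - p) * S y + H p := by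
  have hpd : PerfDist Ω ![x, y] := by
    refine ⟨![e, uEff - e], ?_, ?_, ?_⟩
    · intro i
      fin_cases i
      · exact he
      · intro ω hω
        have := he ω hω
        have h2 := hu ω hω
        simp only [uEff, Fin.mk_one, Matrix.cons_val_one, Matrix.cons_val_fin_one, LinearMap.sub_apply,
          LinearMap.proj_apply, h2]
        constructor <;> linarith
    · simp [Fin.sum_univ_two]
    · intro i j
      fin_cases i <;> fin_cases j <;> simp [uEff, ex, ey, hu x hx, hu y hy]
  have := hS.2 2 ![x, y] (by intro j; fin_cases j <;> simp [hx, hy]) hpd ![p, 1 - p]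
    (by intro j; fin_cases j <;> simp [h0, h1]) (by simp [Fin.sum_univ_two])
  simp only [Fin.sum_univ_two, Matrix.cons_val_zero, Matrix.cons_val_one, Matrix.cons_val_fin_one] at this
  rw [this, H]; ring

/-- Abstract contradiction for even polygons. -/
lemma even_core {S : V3 → ℝ} {A B A' B' C' : V3} (q : ℝ) (q0 : 0 ≤ q) (q1 : q < 1)
    (hcen : A + A' = B + B') (hP : C' + q • A = B + q • A')
    (hA : S A = 0) (hB : S B = 0) (hA' : S A' = 0) (hB' : S B' = 0) (hC' : S C' = 0)
    (mAC : S ((1/2 : ℝ) • A + (1 - 1/2 : ℝ) • C') = 1/2 * S A + (1 - 1/2) * S C' + H (1/2))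
    (mAB : ∀ s t p : ℝ, 0 ≤ s → s ≤ 1 → 0 ≤ t → t ≤ 1 → 0 ≤ p → p ≤ 1 →
      S (p • ((1 - s) • A + s • B) + (1 - p) • ((1 - t) • A' + t • B')) =
        p * S ((1 - s) • A + s • B) + (1 - p) * S ((1 - t) • A' + t • B') + H p) : False := by
  have hB'e : B' = A + A' - B := by rw [hcen]; abel
  have hC'e : C' = B + q • A' - q • A := by rw [← hP]; abel
  have edge : ∀ s : ℝ, 0 ≤ s → s ≤ 1 → S ((1 - s) • A + s • B) = 0 := by
    intro s s0 s1
    have h1 := mAB s 1 (1/2) s0 s1 (by norm_num) le_rfl (by norm_num) (by norm_num)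
    have h2 := mAB 0 (1 - s) (1/2) le_rfl (by norm_num) (by linarith) (by linarith)
      (by norm_num) (by norm_num)
    have h3 := mAB s (1 - s) s s0 s1 (by linarith) (by linarith) s0 s1
    have h4 := mAB 1 1 s (by norm_num) le_rfl (by norm_num) le_rfl s0 s1
    have e1 : (1/2 : ℝ) • ((1 - s) • A + s • B) + (1 - 1/2 : ℝ) • ((1 - 1 : ℝ) • A' + (1 : ℝ) • B')
        = (1/2 : ℝ) • ((1 - 0 : ℝ) • A + (0 : ℝ) • B)
          + (1 - 1/2 : ℝ) • ((1 - (1 - s)) • A' + (1 - s) • B') := by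
      rw [hB'e]; module
    have e2 : s • ((1 - s) • A + s • B) + (1 - s) • ((1 - (1 - s)) • A' + (1 - s) • B')
        = s • ((1 - 1 : ℝ) • A + (1 : ℝ) • B) + (1 - s) • ((1 - 1 : ℝ) • A' + (1 : ℝ) • B') := by
      rw [hB'e]; module
    rw [e1, h2] at h1
    rw [e2, h4] at h3
    have r1 : (1 - 1 : ℝ) • A' + (1 : ℝ) • B' = B' := by module
    have r2 : (1 - 0 : ℝ) • A + (0 : ℝ) • B = A := by module
    have r3 : (1 - 1 : ℝ) • A + (1 : ℝ) • B = B := by module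
    rw [r1, r2, hA, hB'] at h1
    rw [r1, r3, hB, hB'] at h3
    linear_combination -h3 - 2 * (1 - s) * h1
  have hp : (0:ℝ) < 1 - q / 2 := by linarith
  have h5 := mAB ((1/2) / (1 - q/2)) 0 (1 - q/2) (by positivity)
    (by rw [div_le_one hp]; linarith) le_rfl (by norm_num) hp.le (by linarith)
  rw [edge _ (by positivity) (by rw [div_le_one hp]; linarith)] at h5
  have e3 : (1 - q/2) • ((1 - (1/2) / (1 - q/2)) • A + ((1/2) / (1 - q/2)) • B)
      + (1 - (1 - q/2)) • ((1 - 0 : ℝ) • A' + (0 : ℝ) • B')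
      = (1/2 : ℝ) • A + (1 - 1/2 : ℝ) • C' := by
    rw [hC'e, smul_add, smul_smul, smul_smul, mul_sub, mul_div_cancel₀ _ hp.ne']
    module
  have r4 : (1 - 0 : ℝ) • A' + (0 : ℝ) • B' = A' := by module
  rw [e3, mAC, r4, hA, hC', hA', H_eq, H_eq] at h5
  have h6 : Real.binEntropy (1/2) = Real.log 2 := by
    rw [one_div]; exact Real.binEntropy_two_inv
  rw [h6] at h5
  have h7 : Real.binEntropy (1 - q/2) = Real.log 2 := by linarith
  rw [Real.binEntropy_eq_log_two] at h7
  linarith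

lemma odd_analytic (l c : ℝ) (l0 : 0 < l) (hlc : l < c)
    (K : ℝ → ℝ) (hK : K = fun a => -(a * c) * Real.log (a * c)
      - (c + a * l - a * c) * Real.log (c + a * l - a * c) + (a * l) * Real.log (a * l)
      + c * Real.log c)
    (hsym : ∀ a, 0 < a → a < 1 → K a = K (1 - a)) : False := by
  have c0 : 0 < c := l0.trans hlc
  set W : ℝ → ℝ := fun a => K (1 - a) - (-(c + a * l - a * c) * Real.log (c + a * l - a * c)
    + c * Real.log c + a * (l * Real.log l - c * Real.log c)) with hW
  have hWd : DifferentiableAt ℝ W 0 := by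
    rw [hW, hK]
    fun_prop (disch := (simp; positivity))
  have hW0 : W 0 = 0 := by simp [hW, hK]
  have hWe : ∀ a, 0 < a → a < 1 → W a = a * (-(c - l) * Real.log a) := by
    intro a a0 a1
    simp only [hW]
    rw [← hsym a a0 a1, hK]
    simp only
    rw [Real.log_mul a0.ne' c0.ne', Real.log_mul a0.ne' l0.ne']
    ring
  have t1 := (hasDerivAt_iff_tendsto_slope.1 hWd.hasDerivAt).mono_left
    (nhdsWithin_mono (0:ℝ) (show Set.Ioi (0:ℝ) ⊆ {0}ᶜ from fun x hx => ne_of_gt hx))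
  have t2 : Filter.Tendsto (slope W 0) (nhdsWithin 0 (Set.Ioi 0)) Filter.atTop := by
    have : Filter.Tendsto (fun a => -(c - l) * Real.log a) (nhdsWithin 0 (Set.Ioi 0)) Filter.atTop :=
      Real.tendsto_log_nhdsGT_zero.const_mul_atBot_of_neg (by linarith)
    refine this.congr' ?_
    filter_upwards [Ioo_mem_nhdsGT (zero_lt_one' ℝ)] with a ha
    rw [slope_def_field, hW0, hWe a ha.1 ha.2]
    have := ha.1.ne'
    field_simp
    ring
  exact not_tendsto_nhds_of_tendsto_atTop t2 _ t1

lemma mul_H_div {D x : ℝ} (x0 : 0 < x) (xD : x < D) :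
    D * H (x / D) = D * Real.log D - x * Real.log x - (D - x) * Real.log (D - x) := by
  have D0 : 0 < D := x0.trans xD
  have h1 : 1 - x / D = (D - x) / D := by field_simp
  have h2 : 0 < D - x := by linarith
  rw [H, h1, Real.log_div x0.ne' D0.ne', Real.log_div h2.ne' D0.ne']
  field_simp
  ring

lemma odd_id {S : V3 → ℝ} {O A B C : V3} {l c : ℝ} (l0 : 0 < l) (hlc : l < c)
    (hQ : l • O + c • A = l • B + c • C)
    (hO : S O = 0) (hB : S B = 0) (hC : S C = 0) 
    (mO : ∀ s p : ℝ, 0 ≤ s → s ≤ 1 → 0 ≤ p → p ≤ 1 →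
      S (p • O + (1 - p) • (s • A + (1 - s) • B)) =
        p * S O + (1 - p) * S (s • A + (1 - s) • B) + H p)
    (mC : ∀ p : ℝ, 0 ≤ p → p ≤ 1 → S (p • C + (1 - p) • B) = p * S C + (1 - p) * S B + H p)
    {a : ℝ} (a0 : 0 < a) (a1 : a < 1) :
    c * S (a • A + (1 - a) • B) = -(a * c) * Real.log (a * c)
      - (c + a * l - a * c) * Real.log (c + a * l - a * c) + (a * l) * Real.log (a * l)
      + c * Real.log c := by
  have c0 : 0 < c := l0.trans hlc
  have hal : 0 < a * l := by positivity
  have hac : 0 < a * c := by positivity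
  have hac' : a * c < c := by nlinarith
  have D0 : 0 < c + a * l := by positivity
  have h1 := mO a (a * l / (c + a * l)) a0.le a1.le (by positivity)
    (by rw [div_le_one D0]; linarith)
  have h2 := mC (a * c / (c + a * l)) (by positivity) (by rw [div_le_one D0]; linarith)
  have e : (a * l / (c + a * l)) • O + (1 - a * l / (c + a * l)) • (a • A + (1 - a) • B)
      = (a * c / (c + a * l)) • C + (1 - a * c / (c + a * l)) • B := by
    have g1 : 1 - a * l / (c + a * l) = c / (c + a * l) := by field_simp; ring
    have g2 : 1 - a * c / (c + a * l) = (c + a * l - a * c) / (c + a * l) := by field_simp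
    rw [g1, g2]
    have : (a / (c + a * l)) • (l • O + c • A) + (c * (1 - a) / (c + a * l)) • B
       = (a / (c + a * l)) • (l • B + c • C) + (c * (1 - a) / (c + a * l)) • B := by rw [hQ]
    ext i
    have := congrFun this i
    simp only [Pi.add_apply, Pi.smul_apply, smul_eq_mul] at this ⊢
    linear_combination this
  rw [e, h2, hC, hB, hO] at h1
  have k1 := mul_H_div hal (show a * l < c + a * l by linarith)
  have k2 := mul_H_div hac (show a * c < c + a * l by linarith)
  have g3 : (c + a * l) * ((1 - a * l / (c + a * l)) * S (a • A + (1 - a) • B))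
     = c * S (a • A + (1 - a) • B) := by field_simp; ring
  have g4 : c + a * l - a * l = c := by ring
  rw [g4] at k1
  linear_combination k2 - k1 - g3 - (c + a * l) * h1

lemma odd_core {S : V3 → ℝ} {O A B C D : V3} {l c : ℝ} (l0 : 0 < l) (hlc : l < c)
    (hQ : l • O + c • A = l • B + c • C) (hQ' : l • O + c • B = l • A + c • D)
    (hO : S O = 0) (hA : S A = 0) (hB : S B = 0) (hC : S C = 0) (hD : S D = 0)
    (mO : ∀ s p : ℝ, 0 ≤ s → s ≤ 1 → 0 ≤ p → p ≤ 1 →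
      S (p • O + (1 - p) • (s • A + (1 - s) • B)) =
        p * S O + (1 - p) * S (s • A + (1 - s) • B) + H p)
    (mC : ∀ p : ℝ, 0 ≤ p → p ≤ 1 → S (p • C + (1 - p) • B) = p * S C + (1 - p) * S B + H p)
    (mD : ∀ p : ℝ, 0 ≤ p → p ≤ 1 → S (p • D + (1 - p) • A) = p * S D + (1 - p) * S A + H p) :
    False := by
  refine odd_analytic l c l0 hlc _ rfl ?_
  intro a a0 a1
  have h1 := odd_id l0 hlc hQ hO hB hC mO mC a0 a1
  have h2 := odd_id l0 hlc hQ' hO hA hD (fun s p s0 s1 p0 p1 => by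
    have := mO (1 - s) p (by linarith) (by linarith) p0 p1
    rw [sub_sub_cancel, add_comm ((1 - s) • A)] at this
    exact this) mD (sub_pos.2 a1) (sub_lt_self _ a0)
  rw [sub_sub_cancel, add_comm ((1 - a) • B)] at h2
  rw [← h1, ← h2]

lemma cos_odd_le (n : ℕ) (hn : 3 ≤ n) (k : ℤ) (hk : Odd k) :
    Real.cos (k * (π / n)) ≤ Real.cos (π / n) := by
  have n0 : (0 : ℝ) < n := by exact_mod_cast (by omega : 0 < n)
  have nz : (0 : ℤ) < n := by omega
  obtain ⟨j, rfl⟩ := hk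
  obtain ⟨r, q, r0, rn', hj⟩ : ∃ r q : ℤ, 0 ≤ r ∧ r < n ∧ j = r + n * q :=
    ⟨j % n, j / n, Int.emod_nonneg _ nz.ne', Int.emod_lt_of_pos _ nz, (Int.emod_add_mul_ediv j n).symm⟩
  have e : (((2 * j + 1 : ℤ)) : ℝ) * (π / n) = (2 * r + 1) * (π / n) + q * (2 * π) := by
    rw [hj]; push_cast; field_simp; ring
  rw [e, Real.cos_add_int_mul_two_pi, ← sub_nonneg, Real.cos_sub_cos]
  have e1 : (π / n + (2 * r + 1) * (π / n)) / 2 = (r + 1) * (π / n) := by ring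
  have e2 : (π / n - (2 * r + 1) * (π / n)) / 2 = -(r * (π / n)) := by ring
  rw [e1, e2, Real.sin_neg]
  have r0' : (0:ℝ) ≤ r := by exact_mod_cast r0
  have r1' : (r:ℝ) + 1 ≤ n := by exact_mod_cast rn'
  have s1 : 0 ≤ Real.sin ((r + 1) * (π / n)) := by
    apply Real.sin_nonneg_of_nonneg_of_le_pi (by positivity)
    rw [← mul_div_assoc, div_le_iff₀ n0, mul_comm]
    gcongr
  have s2 : 0 ≤ Real.sin (r * (π / n)) := by
    apply Real.sin_nonneg_of_nonneg_of_le_pi (by positivity)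
    rw [← mul_div_assoc, div_le_iff₀ n0, mul_comm]
    gcongr
    linarith
  nlinarith [mul_nonneg s1 s2]

lemma cos_pi_div_pos (n : ℕ) (hn : 3 ≤ n) : 0 < Real.cos (π / n) := by
  have n0 : (3 : ℝ) ≤ n := by exact_mod_cast hn
  apply Real.cos_pos_of_mem_Ioo
  constructor
  · have : 0 < π / n := by positivity
    linarith [Real.pi_pos]
  · apply div_lt_div_of_pos_left Real.pi_pos <;> linarith

lemma rn_sq (n : ℕ) (hn : 3 ≤ n) : rn n ^ 2 = 1 / Real.cos (π / n) := by
  rw [rn, Real.sq_sqrt]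
  exact (one_div_pos.2 (cos_pi_div_pos n hn)).le

lemma pur_add_period (n : ℕ) (hn : 3 ≤ n) (i q : ℤ) : pur n (i + n * q) = pur n i := by
  have n0 : (n : ℝ) ≠ 0 := by exact_mod_cast (by omega : n ≠ 0)
  have e : 2 * π * ((i + n * q : ℤ) : ℝ) / n = 2 * π * i / n + q * (2 * π) := by
    push_cast; field_simp
  rw [pur, pur, e, Real.cos_add_int_mul_two_pi, Real.sin_add_int_mul_two_pi]

lemma pur_mem (n : ℕ) (hn : 3 ≤ n) (i : ℤ) : pur n i ∈ Omega n := by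
  have nz : (0 : ℤ) < n := by omega
  have h1 := Int.emod_nonneg i nz.ne'
  have h2 := Int.emod_lt_of_pos i nz
  apply subset_convexHull
  refine ⟨⟨(i % n).toNat, by omega⟩, ?_⟩
  simp only [Int.toNat_of_nonneg h1]
  rw [← pur_add_period n hn (i % n) (i / n), Int.emod_add_mul_ediv]

lemma Omega_u (n : ℕ) : ∀ x ∈ Omega n, x 2 = 1 := by
  intro x hx
  have : Omega n ⊆ {x : V3 | x 2 = 1} := by
    apply convexHull_min
    · rintro _ ⟨i, rfl⟩
      simp [pur]
    · intro x hx y hy a b _ _ hab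
      simp only [Set.mem_ofPred_eq] at hx hy ⊢
      simp [hx, hy, hab]
  exact this hx

lemma Omega_disc (n : ℕ) : ∀ x ∈ Omega n, x 0 ^ 2 + x 1 ^ 2 ≤ rn n ^ 2 := by
  intro x hx
  have : Omega n ⊆ {x : V3 | x 0 ^ 2 + x 1 ^ 2 ≤ rn n ^ 2} := by
    apply convexHull_min
    · rintro _ ⟨i, rfl⟩
      simp only [pur, Set.mem_ofPred_eq, Matrix.cons_val_zero, Matrix.cons_val_one]
      nlinarith [Real.sin_sq_add_cos_sq (2 * π * ((i : ℕ) : ℤ) / n)]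
    · intro x hx y hy a b ha hb hab
      simp only [Set.mem_ofPred_eq] at hx hy ⊢
      simp only [Pi.add_apply, Pi.smul_apply, smul_eq_mul]
      obtain rfl : b = 1 - a := by linarith
      nlinarith [mul_nonneg ha hb, sq_nonneg (x 0 - y 0), sq_nonneg (x 1 - y 1),
        mul_nonneg (mul_nonneg ha hb) (sq_nonneg (x 0 - y 0)),
        mul_nonneg (mul_nonneg ha hb) (sq_nonneg (x 1 - y 1)),
        mul_le_mul_of_nonneg_left hx ha, mul_le_mul_of_nonneg_left hy hb]
  exact this hx

lemma pur_ext (n : ℕ) (hn : 3 ≤ n) (i : ℤ) : pur n i ∈ Set.extremePoints ℝ (Omega n) := by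
  rw [mem_extremePoints]
  have key : ∀ x ∈ Omega n, ∀ y ∈ Omega n, pur n i ∈ openSegment ℝ x y → x = y := by
    rintro x hx y hy ⟨a, b, ha, hb, hab, he⟩
    have h0 := congrFun he 0
    have h1 := congrFun he 1
    simp only [pur, Pi.add_apply, Pi.smul_apply, smul_eq_mul, Matrix.cons_val_zero,
      Matrix.cons_val_one] at h0 h1
    have hs : (a * x 0 + b * y 0) ^ 2 + (a * x 1 + b * y 1) ^ 2 = rn n ^ 2 := by
      rw [h0, h1]
      linear_combination rn n ^ 2 * Real.sin_sq_add_cos_sq (2 * π * i / n)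
    have dx := Omega_disc n x hx
    have dy := Omega_disc n y hy
    have hab' : 0 < a * b := mul_pos ha hb
    obtain rfl : b = 1 - a := by linarith
    have hz : a * (1 - a) * ((x 0 - y 0) ^ 2 + (x 1 - y 1) ^ 2) ≤ 0 := by
      nlinarith [mul_le_mul_of_nonneg_left dx ha.le, mul_le_mul_of_nonneg_left dy hb.le]
    have hz' : (x 0 - y 0) ^ 2 + (x 1 - y 1) ^ 2 ≤ 0 := by
      by_contra hcon
      push Not at hcon
      linarith [mul_pos hab' hcon]
    ext k
    fin_cases k
    · simp only [Fin.zero_eta]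
      nlinarith [sq_nonneg (x 0 - y 0), sq_nonneg (x 1 - y 1)]
    · simp only [Fin.mk_one]
      nlinarith [sq_nonneg (x 0 - y 0), sq_nonneg (x 1 - y 1)]
    · simp only [Fin.reduceFinMk]
      rw [Omega_u n x hx, Omega_u n y hy]
  refine ⟨pur_mem n hn i, fun x hx y hy hs => ?_⟩
  have hxy := key x hx y hy hs
  subst hxy
  rw [openSegment_same] at hs
  exact ⟨hs.symm, hs.symm⟩

lemma effect_of_pur (n : ℕ) (e : V3 →ₗ[ℝ] ℝ) (h : ∀ j : ℤ, 0 ≤ e (pur n j) ∧ e (pur n j) ≤ 1) :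
    IsEffect (Omega n) e := by
  intro x hx
  have : Omega n ⊆ {x : V3 | 0 ≤ e x ∧ e x ≤ 1} := by
    apply convexHull_min
    · rintro _ ⟨i, rfl⟩
      exact h i
    · intro x hx y hy a b ha hb hab
      simp only [Set.mem_ofPred_eq, map_add, map_smul, smul_eq_mul] at hx hy ⊢
      constructor
      · have := mul_nonneg ha hx.1
        have := mul_nonneg hb hy.1
        linarith
      · have := mul_le_mul_of_nonneg_left hx.2 ha
        have := mul_le_mul_of_nonneg_left hy.2 hb
        linarith
  exact this hx

lemma effE_pur (n : ℕ) (i j : ℤ) :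
    effE n i (pur n j) = (rn n ^ 2 * Real.cos (((2 * j - 2 * i + 1 : ℤ) : ℝ) * (π / n)) + 1) / 2 := by
  have e : ((2 * j - 2 * i + 1 : ℤ) : ℝ) * (π / n) = 2 * π * j / n - (2 * i - 1) * π / n := by
    push_cast; ring
  rw [e, Real.cos_sub]
  simp [effE, dotL, pur, Fin.sum_univ_three]
  ring

lemma effO_pur (n : ℕ) (i j : ℤ) :
    effO n i (pur n j) = (rn n ^ 2 * Real.cos (((2 * j - 2 * i : ℤ) : ℝ) * (π / n)) + 1)
      / (1 + rn n ^ 2) := by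
  have e : ((2 * j - 2 * i : ℤ) : ℝ) * (π / n) = 2 * π * j / n - 2 * i * π / n := by
    push_cast; ring
  rw [e, Real.cos_sub]
  simp [effO, dotL, pur, Fin.sum_univ_three]
  ring

lemma neg_cos_shift (n : ℕ) (hn : 3 ≤ n) (k : ℤ) :
    Real.cos (((k + n : ℤ) : ℝ) * (π / n)) = - Real.cos ((k : ℝ) * (π / n)) := by
  have n0 : (n : ℝ) ≠ 0 := by exact_mod_cast (by omega : n ≠ 0)
  have e : ((k + n : ℤ) : ℝ) * (π / n) = k * (π / n) + π := by
    push_cast; field_simp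
  rw [e, Real.cos_add_pi]

lemma effE_effect (n : ℕ) (hn : 3 ≤ n) (he : Even n) (i : ℤ) : IsEffect (Omega n) (effE n i) := by
  apply effect_of_pur
  intro j
  have c0 := cos_pi_div_pos n hn
  have h1 := cos_odd_le n hn (2 * j - 2 * i + 1) ⟨j - i, by ring⟩
  have h2 := cos_odd_le n hn (2 * j - 2 * i + 1 + n) (by
    obtain ⟨m, hm⟩ := he
    exact ⟨j - i + m, by rw [hm]; push_cast; ring⟩)
  rw [neg_cos_shift n hn] at h2
  rw [effE_pur, rn_sq n hn]
  set y := Real.cos (((2 * j - 2 * i + 1 : ℤ) : ℝ) * (π / n))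
  have h3 : 1 / Real.cos (π / n) * y ≤ 1 := by
    rw [one_div_mul_eq_div, div_le_one c0]; exact h1
  have h4 : -1 ≤ 1 / Real.cos (π / n) * y := by
    rw [one_div_mul_eq_div, le_div_iff₀ c0]; linarith
  constructor <;> linarith

lemma effO_effect (n : ℕ) (hn : 3 ≤ n) (ho : Odd n) (i : ℤ) : IsEffect (Omega n) (effO n i) := by
  apply effect_of_pur
  intro j
  have c0 := cos_pi_div_pos n hn
  have h1 := Real.cos_le_one (((2 * j - 2 * i : ℤ) : ℝ) * (π / n))
  have h2 := cos_odd_le n hn (2 * j - 2 * i + n) (by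
    obtain ⟨m, hm⟩ := ho
    exact ⟨j - i + m, by rw [hm]; push_cast; ring⟩)
  rw [neg_cos_shift n hn] at h2
  have r0 : 0 ≤ rn n ^ 2 := sq_nonneg _
  rw [effO_pur]
  set y := Real.cos (((2 * j - 2 * i : ℤ) : ℝ) * (π / n))
  have h4 : -1 ≤ rn n ^ 2 * y := by
    rw [rn_sq n hn, one_div_mul_eq_div, le_div_iff₀ c0]; linarith
  constructor
  · apply div_nonneg <;> linarith
  · rw [div_le_one (by linarith)]
    nlinarith

lemma effE_one (n : ℕ) (hn : 3 ≤ n) (i j : ℤ) (h : j = i ∨ j = i - 1) :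
    effE n i (pur n j) = 1 := by
  have c0 := cos_pi_div_pos n hn
  have : Real.cos (((2 * j - 2 * i + 1 : ℤ) : ℝ) * (π / n)) = Real.cos (π / n) := by
    rcases h with rfl | rfl
    · push_cast; ring_nf
    · rw [← Real.cos_neg]; push_cast; ring_nf
  rw [effE_pur, this, rn_sq n hn]
  field_simp; norm_num

lemma effE_zero (n m : ℕ) (hn : 3 ≤ n) (hm : n = 2 * m) (i j : ℤ) (h : j = i + m ∨ j = i - 1 + m) :
    effE n i (pur n j) = 0 := by
  have c0 := cos_pi_div_pos n hn
  have : Real.cos (((2 * j - 2 * i + 1 : ℤ) : ℝ) * (π / n)) = - Real.cos (π / n) := by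
    rcases h with rfl | rfl
    · rw [show 2 * (i + (m : ℤ)) - 2 * i + 1 = 1 + n by rw [hm]; push_cast; ring,
        neg_cos_shift n hn]
      push_cast; ring_nf
    · rw [show 2 * (i - 1 + (m : ℤ)) - 2 * i + 1 = -1 + n by rw [hm]; push_cast; ring,
        neg_cos_shift n hn, ← Real.cos_neg]
      push_cast; ring_nf
  rw [effE_pur, this, rn_sq n hn]
  field_simp; norm_num

lemma effO_one (n : ℕ) (hn : 3 ≤ n) (i : ℤ) : effO n i (pur n i) = 1 := by
  have c0 := cos_pi_div_pos n hn
  have : 0 < 1 + rn n ^ 2 := by positivity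
  rw [effO_pur]
  simp
  field_simp
  ring

lemma effO_zero (n m : ℕ) (hn : 3 ≤ n) (hm : n = 2 * m + 1) (i j : ℤ)
    (h : j = i + m ∨ j = i + m + 1) : effO n i (pur n j) = 0 := by
  have c0 := cos_pi_div_pos n hn
  have : Real.cos (((2 * j - 2 * i : ℤ) : ℝ) * (π / n)) = - Real.cos (π / n) := by
    rcases h with rfl | rfl
    · rw [show 2 * (i + (m : ℤ)) - 2 * i = -1 + n by rw [hm]; push_cast; ring,
        neg_cos_shift n hn, ← Real.cos_neg]
      push_cast; ring_nf
    · rw [show 2 * (i + (m : ℤ) + 1) - 2 * i = 1 + n by rw [hm]; push_cast; ring,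
        neg_cos_shift n hn]
      push_cast; ring_nf
  rw [effO_pur, this, rn_sq n hn]
  field_simp; simp

lemma Omega_convex (n : ℕ) {x y : V3} (hx : x ∈ Omega n) (hy : y ∈ Omega n) {s : ℝ}
    (s0 : 0 ≤ s) (s1 : s ≤ 1) : s • x + (1 - s) • y ∈ Omega n :=
  convex_convexHull ℝ _ hx hy s0 (by linarith) (by ring)

lemma no_even (n m : ℕ) (hm : n = 2 * m) (hm2 : 2 ≤ m) (S : V3 → ℝ)
    (hS : IsEntropyOfMixing (Omega n) S) : False := by
  have hn : 3 ≤ n := by omega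
  have n0 : (4 : ℝ) ≤ n := by exact_mod_cast (by omega : 4 ≤ n)
  have m0 : (m : ℝ) ≠ 0 := by exact_mod_cast (by omega : m ≠ 0)
  have hnm : (n : ℝ) = 2 * m := by rw [hm]; push_cast; ring
  have hz : ∀ i, S (pur n i) = 0 := fun i => hS.1 _ (pur_ext n hn i)
  have hmem := pur_mem n hn
  have hef := effE_effect n hn ⟨m, by omega⟩
  have a1 : 2 * π * ((1 : ℤ) : ℝ) / n = 2 * (π / n) := by push_cast; ring
  have a2 : 2 * π * ((2 : ℤ) : ℝ) / n = 2 * (2 * (π / n)) := by push_cast; ring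
  have am : 2 * π * ((m : ℤ) : ℝ) / n = π := by rw [hnm]; push_cast; field_simp
  have am1 : 2 * π * ((m + 1 : ℤ) : ℝ) / n = 2 * (π / n) + π := by
    push_cast at am ⊢; linear_combination am
  have am2 : 2 * π * ((m + 2 : ℤ) : ℝ) / n = 2 * (2 * (π / n)) + π := by
    push_cast at am ⊢; linear_combination am
  refine even_core (S := S) (A := pur n 1) (B := pur n 2) (A' := pur n (m + 1)) (B' := pur n (m + 2))
    (C' := pur n m) (Real.cos (2 * (π / n))) ?_ ?_ ?_ ?_ (hz _) (hz _) (hz _) (hz _) (hz _) ?_ ?_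
  · apply Real.cos_nonneg_of_mem_Icc
    have h1 : 0 < π / n := by positivity
    have h2 : π / n ≤ π / 4 := div_le_div_of_nonneg_left Real.pi_pos.le (by norm_num) n0
    constructor <;> linarith
  · rw [← Real.cos_zero]
    have h1 : 0 < π / n := by positivity
    have h2 : π / n ≤ π / 4 := div_le_div_of_nonneg_left Real.pi_pos.le (by norm_num) n0
    apply Real.cos_lt_cos_of_nonneg_of_le_pi <;> linarith [Real.pi_pos]
  · ext k
    fin_cases k <;> simp [pur, a1, a2, am1, am2, Real.cos_add_pi, Real.sin_add_pi, -Int.cast_add, -Int.cast_one, -Int.cast_ofNat, -Int.cast_natCast] <;> ring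
  · ext k
    have hc := Real.cos_two_mul (2 * (π / n))
    have hs := Real.sin_two_mul (2 * (π / n))
    fin_cases k
    · simp only [pur, a1, a2, am, am1, Real.cos_add_pi, Fin.zero_eta, Pi.add_apply, Pi.smul_apply,
        Matrix.cons_val_zero, smul_eq_mul, Real.cos_pi, hc]
      ring
    · simp only [pur, a1, a2, am, am1, Real.sin_add_pi, Fin.mk_one, Pi.add_apply, Pi.smul_apply,
        Matrix.cons_val_one, smul_eq_mul, Real.sin_pi, hs, Matrix.cons_val_zero]
      ring
    · simp [pur]
  · exact mixS hS (Omega_u n) (effE n 1) (hef 1) (hmem _) (hmem _)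
      (effE_one n hn _ _ (Or.inl rfl)) (effE_zero n m hn hm _ _ (Or.inr (by ring)))
      (by norm_num) (by norm_num)
  · intro s t p s0 s1 t0 t1 p0 p1
    refine mixS hS (Omega_u n) (effE n 2) (hef 2) ?_ ?_ ?_ ?_ p0 p1
    · rw [add_comm]; exact Omega_convex n (hmem _) (hmem _) s0 s1
    · rw [add_comm]; exact Omega_convex n (hmem _) (hmem _) t0 t1
    · rw [map_add, map_smul, map_smul, effE_one n hn _ _ (Or.inl rfl),
        effE_one n hn _ _ (Or.inr (by ring))]
      simp
    · rw [map_add, map_smul, map_smul, effE_zero n m hn hm _ _ (Or.inr (by ring)),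
        effE_zero n m hn hm _ _ (Or.inl (by ring))]
      simp

lemma no_odd (n m : ℕ) (hm : n = 2 * m + 1) (hm2 : 2 ≤ m) (S : V3 → ℝ)
    (hS : IsEntropyOfMixing (Omega n) S) : False := by
  have hn : 3 ≤ n := by omega
  have n0 : (5 : ℝ) ≤ n := by exact_mod_cast (by omega : 5 ≤ n)
  have n0' : (n : ℝ) ≠ 0 := by positivity
  have hnm : (n : ℝ) = 2 * m + 1 := by rw [hm]; push_cast; ring
  have hz : ∀ i, S (pur n i) = 0 := fun i => hS.1 _ (pur_ext n hn i)
  have hmem := pur_mem n hn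
  have hef := effO_effect n hn ⟨m, by omega⟩
  have a0 : 2 * π * ((0 : ℤ) : ℝ) / n = 0 := by simp
  have a1 : 2 * π * ((1 : ℤ) : ℝ) / n = 2 * (π / n) := by push_cast; ring
  have a2 : 2 * π * ((-1 : ℤ) : ℝ) / n = -(2 * (π / n)) := by push_cast; ring
  have am : 2 * π * ((m : ℤ) : ℝ) / n = π - π / n := by
    have : (m : ℝ) = (n - 1) / 2 := by rw [hnm]; ring
    push_cast; rw [this]; field_simp
  have am1 : 2 * π * ((m + 1 : ℤ) : ℝ) / n = π / n + π := by
    have : 2 * π * ((m + 1 : ℤ) : ℝ) / n = 2 * π * ((m : ℤ) : ℝ) / n + 2 * (π / n) := by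
      push_cast; ring
    rw [this, am]; ring
  have e1 : pur n 1 = pur n (m + 1 + m + 1) := by
    rw [← pur_add_period n hn 1 1]; congr 1; rw [hm]; push_cast; ring
  have e2 : pur n (-1) = pur n (m + m) := by
    rw [← pur_add_period n hn (-1) 1]; congr 1; rw [hm]; push_cast; ring
  have t0 : 0 < π / n := by positivity
  have t1 : π / n ≤ π / 5 := div_le_div_of_nonneg_left Real.pi_pos.le (by norm_num) n0
  have hc1 : Real.cos (π / n) < 1 := by
    rw [← Real.cos_zero]
    apply Real.cos_lt_cos_of_nonneg_of_le_pi <;> linarith [Real.pi_pos]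
  have hc2 : 1 / 2 < Real.cos (π / n) := by
    rw [← Real.cos_pi_div_three]
    apply Real.cos_lt_cos_of_nonneg_of_le_pi <;> linarith [Real.pi_pos]
  have hc := Real.cos_two_mul (π / n)
  have hs := Real.sin_two_mul (π / n)
  refine odd_core (S := S) (O := pur n 0) (A := pur n m) (B := pur n (m + 1)) (C := pur n 1)
    (D := pur n (-1)) (l := 2 * Real.cos (π / n) - 1) (c := 1) (by linarith) (by linarith)
    ?_ ?_ (hz _) (hz _) (hz _) (hz _) (hz _) ?_ ?_ ?_
  · ext k
    fin_cases k
    · simp only [pur, a0, a1, am, am1, Real.cos_add_pi, Real.cos_pi_sub, Fin.zero_eta,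
        Pi.add_apply, Pi.smul_apply, Matrix.cons_val_zero, smul_eq_mul, hc, Real.cos_zero]
      ring
    · simp only [pur, a0, a1, am, am1, Real.sin_add_pi, Real.sin_pi_sub, Fin.mk_one,
        Pi.add_apply, Pi.smul_apply, Matrix.cons_val_one, Matrix.cons_val_zero, smul_eq_mul, hs,
        Real.sin_zero]
      ring
    · simp [pur]
  · ext k
    fin_cases k
    · simp only [pur, a0, a2, am, am1, Real.cos_add_pi, Real.cos_pi_sub, Fin.zero_eta,
        Pi.add_apply, Pi.smul_apply, Matrix.cons_val_zero, smul_eq_mul, hc, Real.cos_zero,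
        Real.cos_neg]
      ring
    · simp only [pur, a0, a2, am, am1, Real.sin_add_pi, Real.sin_pi_sub, Fin.mk_one,
        Pi.add_apply, Pi.smul_apply, Matrix.cons_val_one, Matrix.cons_val_zero, smul_eq_mul, hs,
        Real.sin_zero, Real.sin_neg]
      ring
    · simp [pur]
  · intro s p s0 s1 p0 p1
    refine mixS hS (Omega_u n) (effO n 0) (hef 0) (hmem _) (Omega_convex n (hmem _) (hmem _) s0 s1)
      (effO_one n hn 0) ?_ p0 p1
    rw [map_add, map_smul, map_smul, effO_zero n m hn hm _ _ (Or.inl (by ring)),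
        effO_zero n m hn hm _ _ (Or.inr (by ring))]
    simp
  · intro p p0 p1
    have := mixS hS (Omega_u n) (effO n (m + 1)) (hef _) (hmem (m + 1)) (hmem 1)
      (effO_one n hn _) (by rw [e1]; exact effO_zero n m hn hm _ _ (Or.inr rfl))
      (p := 1 - p) (by linarith) (by linarith)
    rw [sub_sub_cancel, add_comm, H_eq, Real.binEntropy_one_sub, ← H_eq] at this
    rw [this]; ring
  · intro p p0 p1
    have := mixS hS (Omega_u n) (effO n m) (hef _) (hmem m) (hmem (-1))
      (effO_one n hn _) (by rw [e2]; exact effO_zero n m hn hm _ _ (Or.inl rfl))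
      (p := 1 - p) (by linarith) (by linarith)
    rw [sub_sub_cancel, add_comm, H_eq, Real.binEntropy_one_sub, ← H_eq] at this
    rw [this]; ring

lemma negMulLog_sum {l : ℕ} (a : Fin l → ℝ) (h : ∀ i j, i ≠ j → a i * a j = 0) :
    Real.negMulLog (∑ i, a i) = ∑ i, Real.negMulLog (a i) := by
  by_cases hz : ∀ i, a i = 0
  · simp [hz]
  · push Not at hz
    obtain ⟨i, hi⟩ := hz
    have : ∀ j, j ≠ i → a j = 0 := fun j hj => by
      rcases mul_eq_zero.1 (h j i hj) with h | h
      · exact h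
      · exact absurd h hi
    rw [Finset.sum_eq_single i (fun j _ hj => this j hj) (by simp),
      Finset.sum_eq_single i (fun j _ hj => by simp [this j hj]) (by simp)]

lemma eff3 (i j : Fin 3) : effO 3 (i : ℤ) (pur 3 (j : ℤ)) = if i = j then 1 else 0 := by
  split_ifs with h
  · subst h; exact effO_one 3 le_rfl _
  · have key : ∀ i j : ℤ, (j = i + 1 ∨ j = i + 2) → effO 3 i (pur 3 j) = 0 := fun i j hij =>
      effO_zero 3 1 le_rfl rfl i j (by rcases hij with h | h <;> [left; right] <;> rw [h] <;> push_cast <;> ring)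
    have e : pur 3 (j : ℤ) = pur 3 ((j : ℤ) + 3) := by
      have := pur_add_period 3 le_rfl j 1
      rw [← this]; rfl
    by_cases hj : (j : ℕ) < i
    · rw [e]
      apply key
      have := i.2; omega
    · apply key
      have := j.2
      have : (i : ℕ) ≠ j := fun h' => h (Fin.ext h')
      omega

lemma tri (x : V3) (hx : x ∈ Omega 3) : (∀ k : Fin 3, 0 ≤ effO 3 (k : ℤ) x) ∧
    ∑ k : Fin 3, effO 3 (k : ℤ) x = 1 ∧ ∑ k : Fin 3, effO 3 (k : ℤ) x • pur 3 (k : ℤ) = x := by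
  have : Omega 3 ⊆ {x : V3 | (∀ k : Fin 3, 0 ≤ effO 3 (k : ℤ) x) ∧
    ∑ k : Fin 3, effO 3 (k : ℤ) x = 1 ∧ ∑ k : Fin 3, effO 3 (k : ℤ) x • pur 3 (k : ℤ) = x} := by
    apply convexHull_min
    · rintro _ ⟨i, rfl⟩
      refine ⟨fun k => ?_, ?_, ?_⟩
      · rw [eff3]; split_ifs <;> norm_num
      · simp [eff3]
      · simp [eff3]
    · rintro x ⟨hx1, hx2, hx3⟩ y ⟨hy1, hy2, hy3⟩ a b ha hb hab
      refine ⟨fun k => ?_, ?_, ?_⟩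
      · have := hx1 k
        have := hy1 k
        simp only [map_add, map_smul, smul_eq_mul]
        positivity
      · simp only [map_add, map_smul, smul_eq_mul, Finset.sum_add_distrib, ← Finset.mul_sum, hx2, hy2]
        linarith
      · simp only [map_add, map_smul, smul_eq_mul, add_smul, mul_smul, Finset.sum_add_distrib,
          ← Finset.smul_sum, hx3, hy3]
  exact this hx

lemma yes_three : IsEntropyOfMixing (Omega 3)
    (fun x => ∑ k : Fin 3, Real.negMulLog (effO 3 (k : ℤ) x)) := by
  constructor
  · intro ω hω
    obtain ⟨i, rfl⟩ := extremePoints_convexHull_subset hω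
    apply Finset.sum_eq_zero
    intro k _
    rw [eff3]; split_ifs <;> simp
  · intro l ω hω ⟨e, he, _, hed⟩ p hp hp1
    have expand : ∀ (f : V3 →ₗ[ℝ] ℝ) j,
        f (ω j) = ∑ k : Fin 3, effO 3 (k : ℤ) (ω j) * f (pur 3 (k : ℤ)) := by
      intro f j
      conv_lhs => rw [← (tri _ (hω j)).2.2]
      simp only [map_sum, map_smul, smul_eq_mul]
    have hv : ∀ i (k : Fin 3), 0 ≤ e i (pur 3 (k : ℤ)) ∧ e i (pur 3 (k : ℤ)) ≤ 1 :=
      fun i k => he i _ (pur_mem 3 le_rfl _)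
    have disj : ∀ (k : Fin 3) i j, i ≠ j →
        effO 3 (k : ℤ) (ω i) * effO 3 (k : ℤ) (ω j) = 0 := by
      intro k i j hij
      by_contra hcon
      have hi := left_ne_zero_of_mul hcon
      have hj := right_ne_zero_of_mul hcon
      have h1 := hed i i
      have h2 := hed i j
      rw [if_pos rfl, expand] at h1
      rw [if_neg hij, expand] at h2
      have h3 : ∑ k : Fin 3, effO 3 (k : ℤ) (ω i) * (1 - e i (pur 3 (k : ℤ))) = 0 := by
        simp only [mul_sub, mul_one, Finset.sum_sub_distrib, h1, (tri _ (hω i)).2.1, sub_self]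
      rw [Finset.sum_eq_zero_iff_of_nonneg (fun k _ => mul_nonneg ((tri _ (hω i)).1 k)
        (by linarith [(hv i k).2]))] at h3
      rw [Finset.sum_eq_zero_iff_of_nonneg (fun k _ => mul_nonneg ((tri _ (hω j)).1 k)
        (hv i k).1)] at h2
      have h4 := (mul_eq_zero.1 (h3 k (Finset.mem_univ _))).resolve_left hi
      have h5 := (mul_eq_zero.1 (h2 k (Finset.mem_univ _))).resolve_left hj
      linarith
    have step : ∀ k : Fin 3, Real.negMulLog (effO 3 (k : ℤ) (∑ i, p i • ω i)) =
        ∑ i, (effO 3 (k : ℤ) (ω i) * Real.negMulLog (p i)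
          + p i * Real.negMulLog (effO 3 (k : ℤ) (ω i))) := by
      intro k
      simp only [map_sum, map_smul, smul_eq_mul]
      rw [negMulLog_sum]
      · simp only [Real.negMulLog_mul]
      · intro i j hij
        linear_combination p i * p j * disj k i j hij
    simp only [step]
    rw [Finset.sum_comm, ← Finset.sum_sub_distrib]
    refine Finset.sum_congr rfl fun i _ => ?_
    rw [Finset.sum_add_distrib, ← Finset.sum_mul, ← Finset.mul_sum, (tri _ (hω i)).2.1,
      Real.negMulLog]
    ring

/-- For every integer `n ≥ 3`, an entropy of mixing on `Ω_n` exists iff `n = 3`. -/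
theorem stmt0 (n : ℕ) (hn : 3 ≤ n) :
    (∃ S : V3 → ℝ, IsEntropyOfMixing (Omega n) S) ↔ n = 3 := by
  constructor
  · rintro ⟨S, hS⟩
    by_contra h3
    rcases Nat.even_or_odd n with ⟨m, hm⟩ | ⟨m, hm⟩
    · exact no_even n m (by omega) (by omega) S hS
    · exact no_odd n m hm (by omega) S hS
  · rintro rfl
    exact ⟨_, yes_three⟩
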